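/- Let ξ = e^{2πi/3}, Γ₁ = ℤ[ξ] the hexagonal lattice, and Γ₂ = ⟨u, v⟩_ℤ for ℝ-linearly independent u, v ∈ ℤ[ξ]. If Im_h(u·conj(v)) divides each of Re_h(u²) − Im_h(u²), Re_h(v²) − Im_h(v²), and Re_h(uv) − Im_h(uv), but divides none of N(u), N(v), and Re_h(u·conj(v)), then the point group of the color group H of the coloring of Γ₁ determined by Γ₂ has order 4 and consists of the identity, the 180°-rotation z ↦ −z, and a pair {s, −s} of reflections from the point group of ℤ[ξ] (so the color group is of type cmm). -/

import Mathlib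

open Complex

/-- A symmetry `h` of the plane (identified with `ℂ`) is a *color symmetry* of the
coloring of `Γ₁` determined by its subgroup `Γ₂` (each coset of `Γ₂` is one color) if
there is a permutation `σ` of the colors with `c (h ℓ) = σ (c ℓ)` for all `ℓ ∈ Γ₁`. -/
def IsColorSymmetry (Γ₁ Γ₂ : AddSubgroup ℂ) (h : ℂ → ℂ) : Prop :=
  ∃ σ : Equiv.Perm (ℂ ⧸ Γ₂), ∀ ℓ ∈ Γ₁,
    (QuotientAddGroup.mk (h ℓ) : ℂ ⧸ Γ₂) = σ (QuotientAddGroup.mk ℓ)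

/-- The point group `P(H)` of the color group `H` of the coloring of `Γ₁` determined by
`Γ₂`: all isometries of the plane fixing the origin, mapping `Γ₁` onto itself, and
permuting the colors. -/
def pointColorGroup (Γ₁ Γ₂ : AddSubgroup ℂ) : Set (ℂ → ℂ) :=
  {g | Isometry g ∧ Function.Surjective g ∧ g 0 = 0 ∧
    g '' (Γ₁ : Set ℂ) = Γ₁ ∧ IsColorSymmetry Γ₁ Γ₂ g}

/-!
Write `ω x y = Im (x * conj y)`. By Cramer's rule `x` lies in the lattice `⟨u, v⟩` iff `ω u v`
divides `ω x v` and `ω u x`. For `x = conj (ξ * u)` and `x = conj (ξ * v)` these numbers are, up to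
sign, the imaginary parts of `ξ * u ^ 2`, `ξ * u * v` and `ξ * v ^ 2`, so the first three
divisibilities say that the reflection `s : z ↦ conj (ξ * z)` preserves `Γ₂`. For `x = ξ * u` and
`x = ξ * v` one finds `N u`, `N v` and combinations of `Re_h` and `Im_h` of `u * conj v`, so the
three divisibilities hold together iff `ξ * Γ₂ ⊆ Γ₂`.

If a unit `m + n * ξ` with `n ≠ 0` preserved `Γ₂`, then `n = ±1`, and subtracting `m` shows that `ξ`
would preserve `Γ₂` too. So only the rotations `±1` survive, and composing with `s` leaves only the
reflections `±s`.
-/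

open Function Set
open scoped ComplexConjugate

theorem exists_eq_mul_or_eq_mul_conj_of_isometry {g : ℂ → ℂ} (hg : Isometry g)
    (surjective : Surjective g) (g_zero : g 0 = 0) :
    ∃ a : ℂ, ‖a‖ = 1 ∧ ((∀ z, g z = a * z) ∨ ∀ z, g z = a * conj z) := by
  let e : ℂ ≃ᵢ ℂ := ⟨Equiv.ofBijective g ⟨hg.injective, surjective⟩, hg⟩
  let f : ℂ ≃ₗᵢ[ℝ] ℂ := e.toRealLinearIsometryEquivOfMapZero g_zero
  have hf (z : ℂ) : g z = f z := rfl
  obtain ⟨a, ha | ha⟩ := linear_isometry_complex f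
  · exact ⟨a, a.norm_coe, .inl fun z ↦ by rw [hf, ha, rotation_apply]⟩
  · exact ⟨a, a.norm_coe, .inr fun z ↦ by rw [hf, ha]; rfl⟩

theorem image_eq_of_involutive_of_mapsTo {α : Type*} {f : α → α} {s : Set α}
    (hf : Involutive f) (hs : MapsTo f s s) : f '' s = s :=
  hs.image_subset.antisymm fun x hx ↦ ⟨f x, hs hx, hf x⟩

section ColorGroup

variable {Γ₁ Γ₂ : AddSubgroup ℂ} {g : ℂ → ℂ}

theorem mapsTo_of_mem_pointColorGroup (hle : Γ₂ ≤ Γ₁) (hg : g ∈ pointColorGroup Γ₁ Γ₂) :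
    MapsTo g Γ₂ Γ₂ := by
  obtain ⟨-, -, g_zero, -, σ, hσ⟩ := hg
  intro x hx
  have hx0 : (x : ℂ ⧸ Γ₂) = (0 : ℂ) := (QuotientAddGroup.eq_zero_iff x).2 hx
  have hgx : (g x : ℂ ⧸ Γ₂) = (g 0 : ℂ) := by
    rw [hσ x (hle hx), hσ 0 Γ₁.zero_mem, hx0]
  rw [g_zero] at hgx
  exact (QuotientAddGroup.eq_zero_iff (g x)).1 hgx

theorem mem_pointColorGroup_of_involutive {f : ℂ ≃ₗᵢ[ℝ] ℂ} (hf : Involutive f)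
    (h₁ : MapsTo f Γ₁ Γ₁) (h₂ : MapsTo f Γ₂ Γ₂) : ⇑f ∈ pointColorGroup Γ₁ Γ₂ := by
  let e : ℂ ≃+ ℂ := f.toLinearEquiv.toAddEquiv
  have he : Γ₂.map (e : ℂ →+ ℂ) = Γ₂ :=
    SetLike.coe_injective (image_eq_of_involutive_of_mapsTo hf h₂)
  exact ⟨f.isometry, f.surjective, f.map_zero, image_eq_of_involutive_of_mapsTo hf h₁,
    (QuotientAddGroup.congr Γ₂ Γ₂ e he).toEquiv, fun _ _ ↦ rfl⟩

theorem id_mem_pointColorGroup : (fun z ↦ z) ∈ pointColorGroup Γ₁ Γ₂ :=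
  mem_pointColorGroup_of_involutive (f := .refl ℝ ℂ) (fun _ ↦ rfl) (mapsTo_id _) (mapsTo_id _)

theorem neg_mem_pointColorGroup (hg : g ∈ pointColorGroup Γ₁ Γ₂) :
    (fun z ↦ -g z) ∈ pointColorGroup Γ₁ Γ₂ := by
  obtain ⟨isometry, surjective, g_zero, image_eq, σ, hσ⟩ := hg
  refine ⟨(LinearIsometryEquiv.neg ℝ).isometry.comp isometry, neg_surjective.comp surjective,
    by simp [g_zero], ?_, σ.trans (Equiv.neg _), fun ℓ hℓ ↦ ?_⟩
  · rw [← image_image, image_eq, image_neg_eq_neg, neg_coe_set]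
  · exact congrArg Neg.neg (hσ ℓ hℓ)

theorem mul_conj_mem_pointColorGroup {ε : ℂ} (hε : ‖ε‖ = 1)
    (h₁ : MapsTo (fun z ↦ ε * conj z) Γ₁ Γ₁) (h₂ : MapsTo (fun z ↦ ε * conj z) Γ₂ Γ₂) :
    (fun z ↦ ε * conj z) ∈ pointColorGroup Γ₁ Γ₂ := by
  let a : Circle := ⟨ε, mem_sphere_zero_iff_norm.2 hε⟩
  refine mem_pointColorGroup_of_involutive (f := conjLIE.trans (rotation a)) (fun z ↦ ?_) h₁ h₂
  change ε * conj (ε * conj z) = z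
  rw [map_mul, conj_conj, ← mul_assoc, mul_conj', hε]
  simp

end ColorGroup

theorem mem_closure_pair_iff_exists_int {R : Type*} [Ring R] {u v x : R} :
    x ∈ AddSubgroup.closure {u, v} ↔ ∃ k l : ℤ, x = k * u + l * v := by
  simp only [AddSubgroup.mem_closure_pair, zsmul_eq_mul, eq_comm]

theorem mapsTo_closure_pair_iff {A B : Type*} [AddGroup A] [AddGroup B] {u v : A}
    {K : AddSubgroup B} (f : A →+ B) :
    MapsTo f (AddSubgroup.closure {u, v}) K ↔ f u ∈ K ∧ f v ∈ K := by
  change AddSubgroup.closure {u, v} ≤ K.comap f ↔ _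
  rw [AddSubgroup.closure_le, pair_subset_iff]
  rfl

section Cramer

variable {u v : ℂ}

theorem im_mul_conj_ne_zero_of_linearIndependent (h : LinearIndependent ℝ ![u, v]) :
    (u * conj v).im ≠ 0 := by
  intro him
  have hreal : u * conj v = ((u * conj v).re : ℂ) := Complex.ext rfl him
  have hv : normSq v = 0 := (LinearIndependent.pair_iff.1 h (normSq v) (-(u * conj v).re) (by
    rw [real_smul, real_smul, ofReal_neg, ← hreal, ← mul_conj]
    ring)).1
  exact h.ne_zero 1 (normSq_eq_zero.1 hv)

theorem im_mul_conj_mul_eq (u v x : ℂ) :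
    ((u * conj v).im : ℂ) * x = (x * conj v).im * u + (u * conj x).im * v := by
  apply Complex.ext <;>
    simp only [mul_im, mul_re, add_im, add_re, conj_im, conj_re, ofReal_im, ofReal_re] <;> ring

theorem mem_closure_pair_iff_dvd {x : ℂ} {c : ℝ} {p m n : ℤ} (huv : (u * conj v).im ≠ 0)
    (hp : (u * conj v).im = p * c) (hm : (x * conj v).im = m * c)
    (hn : (u * conj x).im = n * c) :
    x ∈ AddSubgroup.closure {u, v} ↔ p ∣ m ∧ p ∣ n := by
  have hpc : (p : ℝ) * c ≠ 0 := hp ▸ huv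
  have hc : c ≠ 0 := right_ne_zero_of_mul hpc
  rw [mem_closure_pair_iff_exists_int]
  constructor
  · rintro ⟨k, l, rfl⟩
    have hk : ((k * u + l * v) * conj v).im = k * (p * c) := by
      rw [← hp]
      simp only [mul_im, mul_re, add_im, add_re, conj_im, conj_re, intCast_im, intCast_re]
      ring
    have hl : (u * conj (k * u + l * v)).im = l * (p * c) := by
      rw [← hp]
      simp only [mul_im, mul_re, add_im, add_re, conj_im, conj_re, intCast_im, intCast_re]
      ring
    refine ⟨⟨k, ?_⟩, ⟨l, ?_⟩⟩
    · exact_mod_cast mul_right_cancel₀ hc (hm.symm.trans (hk.trans (by ring)) : m * c = p * k * c)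
    · exact_mod_cast mul_right_cancel₀ hc (hn.symm.trans (hl.trans (by ring)) : n * c = p * l * c)
  · rintro ⟨⟨k, rfl⟩, ⟨l, rfl⟩⟩
    refine ⟨k, l, mul_left_cancel₀ (ofReal_ne_zero.2 hpc) ?_⟩
    have cramer := im_mul_conj_mul_eq u v x
    rw [hp, hm, hn] at cramer
    rw [cramer]
    push_cast
    ring

end Cramer

section CubeRoot

variable {ξ : ℂ}

theorem sq_of_isPrimitiveRoot_three (hξ : IsPrimitiveRoot ξ 3) : ξ ^ 2 = -1 - ξ := by
  have hsum := hξ.geom_sum_eq_zero (by norm_num)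
  simp only [Finset.sum_range_succ, Finset.sum_range_zero] at hsum
  linear_combination hsum

theorem conj_of_isPrimitiveRoot_three (hξ : IsPrimitiveRoot ξ 3) : conj ξ = -1 - ξ := by
  rw [← inv_eq_conj (hξ.norm'_eq_one (by norm_num)), ← sq_of_isPrimitiveRoot_three hξ]
  exact inv_eq_of_mul_eq_one_right (by rw [← pow_succ', hξ.pow_eq_one])

theorem isPrimitiveRoot_exp_two_pi_mul_I_div_three :
    IsPrimitiveRoot (Complex.exp (2 * Real.pi * I / 3)) 3 :=
  Complex.isPrimitiveRoot_exp 3 (by norm_num)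

theorem exp_pi_mul_I_div_three_pow_four :
    Complex.exp (Real.pi * I / 3) ^ 4 = conj (Complex.exp (2 * Real.pi * I / 3)) := by
  have hξ := isPrimitiveRoot_exp_two_pi_mul_I_div_three
  rw [conj_of_isPrimitiveRoot_three hξ, ← sq_of_isPrimitiveRoot_three hξ, ← Complex.exp_nat_mul,
    ← Complex.exp_nat_mul]
  congr 1
  push_cast
  ring

/-- The hexagonal lattice `ℤ[ξ]`, spanned over `ℤ` by `1` and `ξ`; it is closed under
multiplication and conjugation when `ξ` is a primitive third root of unity. -/
def eisensteinLattice (ξ : ℂ) : AddSubgroup ℂ :=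
  AddSubgroup.closure {1, ξ}

namespace eisensteinLattice

theorem mem_iff {z : ℂ} : z ∈ eisensteinLattice ξ ↔ ∃ m n : ℤ, z = m + n * ξ := by
  simp only [eisensteinLattice, mem_closure_pair_iff_exists_int, mul_one]

theorem one_mem : 1 ∈ eisensteinLattice ξ :=
  mem_iff.2 ⟨1, 0, by simp⟩

theorem mul_mem (hξ : IsPrimitiveRoot ξ 3) {z w : ℂ} (hz : z ∈ eisensteinLattice ξ)
    (hw : w ∈ eisensteinLattice ξ) : z * w ∈ eisensteinLattice ξ := by
  obtain ⟨a, b, rfl⟩ := mem_iff.1 hz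
  obtain ⟨c, d, rfl⟩ := mem_iff.1 hw
  refine mem_iff.2 ⟨a * c - b * d, a * d + b * c - b * d, ?_⟩
  push_cast
  linear_combination (b * d : ℂ) * sq_of_isPrimitiveRoot_three hξ

theorem conj_mem (hξ : IsPrimitiveRoot ξ 3) {z : ℂ} (hz : z ∈ eisensteinLattice ξ) :
    conj z ∈ eisensteinLattice ξ := by
  obtain ⟨a, b, rfl⟩ := mem_iff.1 hz
  refine mem_iff.2 ⟨a - b, -b, ?_⟩
  simp only [map_add, map_mul, map_intCast, conj_of_isPrimitiveRoot_three hξ]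
  push_cast
  ring

end eisensteinLattice

theorem normSq_add_mul_of_isPrimitiveRoot_three (hξ : IsPrimitiveRoot ξ 3) (m n : ℝ) :
    normSq (m + n * ξ) = m ^ 2 - m * n + n ^ 2 := by
  apply ofReal_injective
  rw [← mul_conj]
  simp only [map_add, map_mul, conj_ofReal, conj_of_isPrimitiveRoot_three hξ]
  push_cast
  linear_combination (-n ^ 2 : ℂ) * sq_of_isPrimitiveRoot_three hξ

theorem eq_one_or_neg_one_of_mapsTo_mul (hξ : IsPrimitiveRoot ξ 3) {Γ : AddSubgroup ℂ} {a : ℂ}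
    (ha : a ∈ eisensteinLattice ξ) (ha_norm : ‖a‖ = 1) (ha_maps : MapsTo (a * ·) Γ Γ)
    (hrot : ¬MapsTo (ξ * ·) Γ Γ) : a = 1 ∨ a = -1 := by
  obtain ⟨m, n, rfl⟩ := eisensteinLattice.mem_iff.1 ha
  have hN : m ^ 2 - m * n + n ^ 2 = 1 := by
    have hsq := normSq_add_mul_of_isPrimitiveRoot_three hξ m n
    rw [normSq_eq_norm_sq, ofReal_intCast, ofReal_intCast, ha_norm, one_pow] at hsq
    exact_mod_cast hsq.symm
  have hnξ {z : ℂ} (hz : z ∈ Γ) : n * (ξ * z) ∈ Γ := by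
    have hmz : m * z ∈ Γ := by simpa only [zsmul_eq_mul] using Γ.zsmul_mem hz m
    convert Γ.sub_mem (ha_maps hz) hmz using 1
    ring
  have hn_lower : -1 ≤ n := by nlinarith [sq_nonneg (n - 2 * m)]
  have hn_upper : n ≤ 1 := by nlinarith [sq_nonneg (n - 2 * m)]
  obtain rfl | rfl | rfl : n = -1 ∨ n = 0 ∨ n = 1 := by omega
  · exact absurd (fun z hz ↦ by simpa using hnξ hz) hrot
  · obtain rfl | rfl : m = 1 ∨ m = -1 := by simpa using hN
    all_goals simp
  · exact absurd (fun z hz ↦ by simpa using hnξ hz) hrot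

theorem pointColorGroup_eq_of_mapsTo_mul_conj (hξ : IsPrimitiveRoot ξ 3) {Γ : AddSubgroup ℂ}
    (hle : Γ ≤ eisensteinLattice ξ) {ε : ℂ} (hε : ε ∈ eisensteinLattice ξ) (hε_norm : ‖ε‖ = 1)
    (hrefl : MapsTo (fun z ↦ ε * conj z) Γ Γ) (hrot : ¬MapsTo (ξ * ·) Γ Γ) :
    pointColorGroup (eisensteinLattice ξ) Γ =
      {fun z ↦ z, fun z ↦ -z, fun z ↦ ε * conj z, fun z ↦ -(ε * conj z)} := by
  ext g
  constructor
  · intro hg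
    simp only [mem_insert_iff, mem_singleton_iff, funext_iff]
    have hg_maps := mapsTo_of_mem_pointColorGroup hle hg
    obtain ⟨isometry, surjective, g_zero, image_eq, -⟩ := hg
    have hg_one : g 1 ∈ eisensteinLattice ξ :=
      image_eq.subset (mem_image_of_mem g eisensteinLattice.one_mem)
    obtain ⟨a, ha_norm, hrotation | hreflection⟩ :=
      exists_eq_mul_or_eq_mul_conj_of_isometry isometry surjective g_zero
    · have ha_mem : a ∈ eisensteinLattice ξ := by simpa [hrotation] using hg_one
      have ha_maps : MapsTo (a * ·) Γ Γ := fun z hz ↦ by simpa [hrotation] using hg_maps hz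
      obtain rfl | rfl := eq_one_or_neg_one_of_mapsTo_mul hξ ha_mem ha_norm ha_maps hrot <;>
        simp [hrotation]
    · have ha_mem : a ∈ eisensteinLattice ξ := by simpa [hreflection] using hg_one
      have haε_mem : a * conj ε ∈ eisensteinLattice ξ :=
        eisensteinLattice.mul_mem hξ ha_mem (eisensteinLattice.conj_mem hξ hε)
      have haε_maps : MapsTo ((a * conj ε) * ·) Γ Γ := fun z hz ↦ by
        simpa [hreflection, mul_assoc] using hg_maps (hrefl hz)
      have ha_eq : a = a * conj ε * ε := by simp [mul_assoc, conj_mul', hε_norm]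
      obtain h | h := eq_one_or_neg_one_of_mapsTo_mul hξ haε_mem (by simp [ha_norm, hε_norm])
        haε_maps hrot <;> rw [h] at ha_eq <;> simp [hreflection, ha_eq]
  · have hε_mem : (fun z ↦ ε * conj z) ∈ pointColorGroup (eisensteinLattice ξ) Γ :=
      mul_conj_mem_pointColorGroup hε_norm
        (fun z hz ↦ eisensteinLattice.mul_mem hξ hε (eisensteinLattice.conj_mem hξ hz)) hrefl
    rintro (rfl | rfl | rfl | rfl)
    exacts [id_mem_pointColorGroup, neg_mem_pointColorGroup id_mem_pointColorGroup, hε_mem,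
      neg_mem_pointColorGroup hε_mem]

end CubeRoot

section Sublattice

variable {ξ u v : ℂ} {p₁ p₂ nu nv q₁ q₂ r₁ r₂ s₁ s₂ : ℤ}

theorem im_mul_add_mul_of_isPrimitiveRoot_three (hξ : IsPrimitiveRoot ξ 3) (a b : ℝ) :
    (ξ * (a + b * ξ)).im = (a - b) * ξ.im := by
  have h : ξ * (a + b * ξ) = ((-b : ℝ) : ℂ) + ((a - b : ℝ) : ℂ) * ξ := by
    push_cast
    linear_combination (b : ℂ) * sq_of_isPrimitiveRoot_three hξ
  rw [h, add_im, ofReal_im, im_ofReal_mul, zero_add]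

theorem mapsTo_rotation_closure_pair_iff (hξ : IsPrimitiveRoot ξ 3)
    (hind : LinearIndependent ℝ ![u, v]) (hp : u * conj v = p₁ + p₂ * ξ)
    (hnu : u * conj u = nu) (hnv : v * conj v = nv) :
    MapsTo (ξ * ·) (AddSubgroup.closure {u, v}) (AddSubgroup.closure {u, v} : AddSubgroup ℂ) ↔
      p₂ ∣ nu ∧ p₂ ∣ nv ∧ p₂ ∣ p₁ := by
  have huv := im_mul_conj_ne_zero_of_linearIndependent hind
  have hp_im : (u * conj v).im = p₂ * ξ.im := by simp [hp]
  have hu_mem : ξ * u ∈ AddSubgroup.closure {u, v} ↔ p₂ ∣ p₁ - p₂ ∧ p₂ ∣ -nu := by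
    refine mem_closure_pair_iff_dvd huv hp_im ?_ ?_
    · rw [mul_assoc, hp]
      exact_mod_cast im_mul_add_mul_of_isPrimitiveRoot_three hξ p₁ p₂
    · rw [map_mul, mul_left_comm, hnu]
      simp [mul_comm]
  have hv_mem : ξ * v ∈ AddSubgroup.closure {u, v} ↔ p₂ ∣ nv ∧ p₂ ∣ -p₁ := by
    refine mem_closure_pair_iff_dvd huv hp_im ?_ ?_
    · rw [mul_assoc, hnv]
      simp [mul_comm]
    · have h : u * conj (ξ * v) = p₂ + p₁ * conj ξ := by
        rw [map_mul, mul_left_comm, hp, conj_of_isPrimitiveRoot_three hξ]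
        linear_combination (-p₂ : ℂ) * sq_of_isPrimitiveRoot_three hξ
      rw [h]
      simp
  have h := mapsTo_closure_pair_iff (u := u) (v := v) (K := AddSubgroup.closure {u, v})
    (AddMonoidHom.mulLeft ξ)
  simp only [AddMonoidHom.coe_mulLeft, hu_mem, hv_mem, dvd_neg, dvd_sub_self_right] at h
  tauto

theorem mapsTo_reflection_closure_pair_iff (hξ : IsPrimitiveRoot ξ 3)
    (hind : LinearIndependent ℝ ![u, v]) (hp : u * conj v = p₁ + p₂ * ξ)
    (hq : u ^ 2 = q₁ + q₂ * ξ) (hr : v ^ 2 = r₁ + r₂ * ξ) (hs : u * v = s₁ + s₂ * ξ) :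
    MapsTo (fun z ↦ conj (ξ * z)) (AddSubgroup.closure {u, v})
        (AddSubgroup.closure {u, v} : AddSubgroup ℂ) ↔
      p₂ ∣ q₁ - q₂ ∧ p₂ ∣ r₁ - r₂ ∧ p₂ ∣ s₁ - s₂ := by
  have huv := im_mul_conj_ne_zero_of_linearIndependent hind
  have hp_im : (u * conj v).im = p₂ * ξ.im := by simp [hp]
  have im_eq {w : ℂ} {a b : ℤ} (hw : w = a + b * ξ) : (ξ * w).im = (a - b : ℤ) * ξ.im := by
    rw [hw]
    exact_mod_cast im_mul_add_mul_of_isPrimitiveRoot_three hξ a b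
  have im_conj_eq {w : ℂ} {a b : ℤ} (hw : w = a + b * ξ) :
      (conj (ξ * w)).im = (-(a - b) : ℤ) * ξ.im := by
    rw [conj_im, im_eq hw]
    push_cast
    ring
  have hu_mem : conj (ξ * u) ∈ AddSubgroup.closure {u, v} ↔ p₂ ∣ -(s₁ - s₂) ∧ p₂ ∣ q₁ - q₂ := by
    refine mem_closure_pair_iff_dvd huv hp_im ?_ ?_
    · rw [← im_conj_eq hs, ← map_mul, mul_assoc]
    · rw [← im_eq hq, conj_conj, mul_left_comm, sq]
  have hv_mem : conj (ξ * v) ∈ AddSubgroup.closure {u, v} ↔ p₂ ∣ -(r₁ - r₂) ∧ p₂ ∣ s₁ - s₂ := by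
    refine mem_closure_pair_iff_dvd huv hp_im ?_ ?_
    · rw [← im_conj_eq hr, ← map_mul, mul_assoc, sq]
    · rw [← im_eq hs, conj_conj, mul_left_comm]
  have h := mapsTo_closure_pair_iff (u := u) (v := v) (K := AddSubgroup.closure {u, v})
    ((starRingEnd ℂ : ℂ →+ ℂ).comp (AddMonoidHom.mulLeft ξ))
  simp only [AddMonoidHom.coe_comp, AddMonoidHom.coe_mulLeft, AddMonoidHom.coe_coe, comp_def,
    hu_mem, hv_mem, dvd_neg] at h
  tauto

end Sublattice

theorem pointColorGroup_cmm_e_general {ξ u v : ℂ} (hξ : IsPrimitiveRoot ξ 3)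
    (hu : u ∈ eisensteinLattice ξ) (hv : v ∈ eisensteinLattice ξ)
    (hind : LinearIndependent ℝ ![u, v]) {p₁ p₂ nu nv q₁ q₂ r₁ r₂ s₁ s₂ : ℤ}
    (hp : u * conj v = p₁ + p₂ * ξ) (hnu : u * conj u = nu) (hnv : v * conj v = nv)
    (hq : u ^ 2 = q₁ + q₂ * ξ) (hr : v ^ 2 = r₁ + r₂ * ξ) (hs : u * v = s₁ + s₂ * ξ)
    (hdvd : p₂ ∣ q₁ - q₂ ∧ p₂ ∣ r₁ - r₂ ∧ p₂ ∣ s₁ - s₂)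
    (hndvd : ¬(p₂ ∣ nu ∧ p₂ ∣ nv ∧ p₂ ∣ p₁)) :
    pointColorGroup (eisensteinLattice ξ) (AddSubgroup.closure {u, v}) =
      {fun z ↦ z, fun z ↦ -z, fun z ↦ conj (ξ * z), fun z ↦ -conj (ξ * z)} := by
  have hξ_mem : ξ ∈ eisensteinLattice ξ := AddSubgroup.subset_closure (by simp)
  have hle : AddSubgroup.closure {u, v} ≤ eisensteinLattice ξ :=
    (AddSubgroup.closure_le _).2 (pair_subset hu hv)
  have hrefl := (mapsTo_reflection_closure_pair_iff hξ hind hp hq hr hs).2 hdvd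
  have hrot := mt (mapsTo_rotation_closure_pair_iff hξ hind hp hnu hnv).1 hndvd
  simp only [map_mul] at hrefl ⊢
  exact pointColorGroup_eq_of_mapsTo_mul_conj hξ hle (eisensteinLattice.conj_mem hξ hξ_mem)
    (by rw [norm_conj, hξ.norm'_eq_one (by norm_num)]) hrefl hrot

/-- Case (e) for the hexagonal lattice `Γ₁ = ℤ[ξ]`, `ξ = e^{2πi/3}`: if
`Im_h(u·conj v)` divides all of `Re_h(u²) - Im_h(u²)`, `Re_h(v²) - Im_h(v²)`,
`Re_h(uv) - Im_h(uv)` but none of `N(u)`, `N(v)`, `Re_h(u·conj v)`, then the point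
group of the color group of the coloring of `Γ₁` determined by `Γ₂ = ⟨u, v⟩_ℤ` has
order `4`, consisting of the identity, the `180°`-rotation, and a pair `{s, -s}` of
reflections from the point group of `ℤ[ξ]` (type `cmm`). -/
theorem pointColorGroup_cmm_e (ξ ζ : ℂ)
    (hξ : ξ = Complex.exp (2 * (Real.pi : ℂ) * I / 3))
    (hζ : ζ = Complex.exp ((Real.pi : ℂ) * I / 3))
    (u v : ℂ) (a₁ a₂ b₁ b₂ : ℤ)
    (hu : u = a₁ + a₂ * ξ) (hv : v = b₁ + b₂ * ξ)
    (hind : LinearIndependent ℝ ![u, v])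
    (Γ₁ Γ₂ : AddSubgroup ℂ)
    (hΓ₁ : Γ₁ = AddSubgroup.closure ({1, ξ} : Set ℂ))
    (hΓ₂ : Γ₂ = AddSubgroup.closure ({u, v} : Set ℂ))
    (p₁ p₂ nu nv q₁ q₂ r₁ r₂ s₁ s₂ : ℤ)
    (hp : u * starRingEnd ℂ v = p₁ + p₂ * ξ)
    (hnu : u * starRingEnd ℂ u = (nu : ℂ))
    (hnv : v * starRingEnd ℂ v = (nv : ℂ))
    (hq : u ^ 2 = q₁ + q₂ * ξ)
    (hr : v ^ 2 = r₁ + r₂ * ξ)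
    (hs : u * v = s₁ + s₂ * ξ)
    (hdvd : p₂ ∣ (q₁ - q₂) ∧ p₂ ∣ (r₁ - r₂) ∧ p₂ ∣ (s₁ - s₂))
    (hndvd : ¬ p₂ ∣ nu ∧ ¬ p₂ ∣ nv ∧ ¬ p₂ ∣ p₁) :
    ∃ k : Fin 6, pointColorGroup Γ₁ Γ₂ =
      {fun z => z, fun z => -z, fun z => ζ ^ (k : ℕ) * starRingEnd ℂ z,
        fun z => -(ζ ^ (k : ℕ) * starRingEnd ℂ z)} := by
  subst hu hv hΓ₁ hΓ₂ hξ hζ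
  have h := pointColorGroup_cmm_e_general isPrimitiveRoot_exp_two_pi_mul_I_div_three
    (eisensteinLattice.mem_iff.2 ⟨a₁, a₂, rfl⟩) (eisensteinLattice.mem_iff.2 ⟨b₁, b₂, rfl⟩)
    hind hp hnu hnv hq hr hs hdvd fun h ↦ hndvd.1 h.1
  simp only [map_mul, ← exp_pi_mul_I_div_three_pow_four] at h
  exact ⟨4, h⟩
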